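/- arXiv:2410.14085 — 5 statements merged into one kernel-verified Lean document; each statement's English description precedes it below -/
import Mathlib

section
/- Let M be a free ℤ-module of finite rank equipped with a symmetric ℤ-valued bilinear form B which is even, i.e. B(x,x) is even for every x ∈ M. Suppose e₁, …, eₙ ∈ M satisfy B(eᵢ,eᵢ) = −2 for all i and B(eᵢ,eⱼ) = 0 for all i ≠ j, and suppose there exists v ∈ M with 2v = e₁ + ⋯ + eₙ. Then n is divisible by 4 and n ≤ rank M. -/
/-- Lattice-theoretic content of Lemma 3.1 and Corollary 3.3: in a free ℤ-module `M` of finite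
rank with an even symmetric bilinear form `B`, if `e₁, …, eₙ` are pairwise orthogonal vectors
of square `−2` whose sum is twice an element of `M`, then `4 ∣ n` and `n ≤ rank M`. -/
theorem four_dvd_and_le_rank_of_two_divisible_sum
    (M : Type*) [AddCommGroup M] [Module ℤ M] [Module.Free ℤ M] [Module.Finite ℤ M]
    (B : M →ₗ[ℤ] M →ₗ[ℤ] ℤ)
    (hsymm : ∀ x y : M, B x y = B y x)
    (heven : ∀ x : M, (2 : ℤ) ∣ B x x)
    (n : ℕ) (e : Fin n → M)
    (hsq : ∀ i, B (e i) (e i) = -2)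
    (horth : ∀ i j, i ≠ j → B (e i) (e j) = 0)
    (hdiv : ∃ v : M, 2 • v = ∑ i, e i) :
    4 ∣ n ∧ n ≤ Module.finrank ℤ M := by
  have hgram : ∀ i j, B (e i) (e j) = if i = j then -2 else 0 := by
    intro i j
    split_ifs with h
    · rw [← h, hsq]
    · exact horth i j h
  constructor
  · obtain ⟨v, hv⟩ := hdiv
    obtain ⟨k, hk⟩ := heven v
    have hnorm : B (2 • v) (2 • v) = -2 * n := by
      rw [hv]
      simp [hgram, mul_comm]
    have hscale : B (2 • v) (2 • v) = 4 * B v v := by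
      simp only [map_nsmul, LinearMap.smul_apply, nsmul_eq_mul]
      push_cast
      ring
    omega
  · have hli : LinearIndependent ℤ e := by
      rw [Fintype.linearIndependent_iff]
      intro c hc i
      have h := congrArg (B (e i)) hc
      simpa [hgram] using h
    simpa using hli.fintype_card_le_finrank
end

section
/- Let R be an integral domain of characteristic 2 and let φ, a, ψ, g ∈ R[t] be polynomials in one variable. If (t·φ(t)² + a(t)²)·φ(t)⁴ + ψ(t)⁴ = g(t)⁴ holds in R[t], then φ = 0. -/
open Polynomial

/-- In characteristic 2, the formal derivative of a square vanishes. -/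
theorem derivative_sq_eq_zero_of_charTwo {R : Type*} [CommRing R] [CharP R 2] (p : R[X]) :
    derivative (p ^ 2) = 0 := by
  rw [derivative_sq, CharTwo.two_eq_zero, C_0, zero_mul, zero_mul]

/-- Key step of Lemma 7.5: over an integral domain `R` of characteristic 2, if
`(t·φ(t)² + a(t)²)·φ(t)⁴ + ψ(t)⁴ = g(t)⁴` in `R[t]`, then `φ = 0`. -/
theorem phi_eq_zero_of_discriminant_fourth_power
    (R : Type*) [CommRing R] [IsDomain R] [CharP R 2]
    (φ a ψ g : R[X])
    (h : (X * φ ^ 2 + a ^ 2) * φ ^ 4 + ψ ^ 4 = g ^ 4) :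
    φ = 0 := by
  have square_form : X * (φ ^ 3) ^ 2 + (a * φ ^ 2) ^ 2 + (ψ ^ 2) ^ 2 = (g ^ 2) ^ 2 := by
    linear_combination h
  have derivative_eq := congrArg derivative square_form
  simp only [derivative_add, derivative_mul, derivative_X, derivative_sq_eq_zero_of_charTwo,
    one_mul, mul_zero, add_zero] at derivative_eq
  exact pow_eq_zero_iff three_ne_zero |>.mp (pow_eq_zero_iff two_ne_zero |>.mp derivative_eq)
end

section
/- Let V be a vector space over ℚ with a symmetric bilinear form ⟨·,·⟩. Fix natural numbers k ≤ ℓ ≤ 5 and vectors F, s, ξ ∈ V, a family E_{i,j} ∈ V for 1 ≤ i ≤ ℓ and 1 ≤ j ≤ 4, and C_j ∈ V for 1 ≤ j ≤ 20−4ℓ, satisfying: ⟨F,F⟩ = 0, ⟨F,s⟩ = 2, ⟨F,E_{i,j}⟩ = 0 and ⟨F,C_j⟩ = 0 for all indices; ⟨s,s⟩ = −2, ⟨s,E_{i,1}⟩ = 2 for i ≤ k, ⟨s,E_{i,1}⟩ = 0 for i > k, ⟨s,E_{i,j}⟩ = 0 for j ≠ 1, ⟨s,C_j⟩ = 0; ⟨E_{i,j},E_{i,j}⟩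 = −2 and distinct vectors E_{i,j} are pairwise orthogonal; ⟨E_{i,j},C_{j'}⟩ = 0; ⟨C_j,C_j⟩ = −2 and distinct vectors C_j are pairwise orthogonal; ⟨ξ,F⟩ = 2, ⟨ξ,E_{i,j}⟩ = 0 for all i,j, ⟨ξ,C_j⟩ = 1 for all j, and ⟨ξ,ξ⟩ = −2. Suppose ξ = a·F + b·s + Σ_{i,j} α_{i,j}·E_{i,j} + Σ_j β_j·C_j for rational numbers a, b, α_{i,j}, β_j. Then b = 1, α_{i,1} = 1 for i ≤ k, α_{i,j} = 0 for all other pairs (i,j), β_j = −1/2 for all j, and a = (5 − k − ℓ)/2. -/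
/-- Linear-algebra form of Proposition 6.2: expansion of the cusp curve `ξ` in the basis
`F, s, E_{i,j}, C_j` of `Pic(X) ⊗ ℚ` for a quasi-elliptic K3 surface with a 2-section `s`,
`ℓ` fibers of type `I₀*` and `20 − 4ℓ` fibers of type `III`. Here `E i 0` plays the role of
the tail `E_{4i−3}` met by `s` (with multiplicity 2) exactly for `i < k`. -/
theorem cusp_expansion_two_section
    (V : Type*) [AddCommGroup V] [Module ℚ V]
    (B : V →ₗ[ℚ] V →ₗ[ℚ] ℚ) (hsymm : ∀ x y : V, B x y = B y x)
    (k l : ℕ) (hkl : k ≤ l) (hl : l ≤ 5)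
    (F s ξ : V) (E : Fin l → Fin 4 → V) (C : Fin (20 - 4 * l) → V)
    (a b : ℚ) (α : Fin l → Fin 4 → ℚ) (β : Fin (20 - 4 * l) → ℚ)
    (hFF : B F F = 0) (hFs : B F s = 2)
    (hFE : ∀ i j, B F (E i j) = 0) (hFC : ∀ j, B F (C j) = 0)
    (hss : B s s = -2)
    (hsE1 : ∀ i : Fin l, (i : ℕ) < k → B s (E i 0) = 2)
    (hsE1' : ∀ i : Fin l, ¬ (i : ℕ) < k → B s (E i 0) = 0)
    (hsEj : ∀ (i : Fin l) (j : Fin 4), j ≠ 0 → B s (E i j) = 0)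
    (hsC : ∀ j, B s (C j) = 0)
    (hEE : ∀ i j, B (E i j) (E i j) = -2)
    (hEE' : ∀ i j i' j', (i, j) ≠ (i', j') → B (E i j) (E i' j') = 0)
    (hEC : ∀ i j j', B (E i j) (C j') = 0)
    (hCC : ∀ j, B (C j) (C j) = -2)
    (hCC' : ∀ j j', j ≠ j' → B (C j) (C j') = 0)
    (hxF : B ξ F = 2)
    (hxE : ∀ i j, B ξ (E i j) = 0)
    (hxC : ∀ j, B ξ (C j) = 1)
    (hxx : B ξ ξ = -2)
    (hrep : ξ = a • F + b • s + (∑ i, ∑ j, α i j • E i j) + ∑ j, β j • C j) :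
    b = 1 ∧ (∀ i : Fin l, (i : ℕ) < k → α i 0 = 1) ∧
      (∀ (i : Fin l) (j : Fin 4), ¬ ((i : ℕ) < k ∧ j = 0) → α i j = 0) ∧
      (∀ j, β j = -1/2) ∧
      a = (5 - (k : ℚ) - (l : ℚ)) / 2 := by
  have expand : ∀ y, B y ξ = a * B y F + b * B y s + (∑ i, ∑ j, α i j * B y (E i j))
      + ∑ j, β j * B y (C j) := by
    intro y
    rw [hrep]
    simp only [map_add, map_sum, map_smul, smul_eq_mul]
  have hb : b = 1 := by
    have h := expand F
    simp only [hsymm F ξ, hxF, hFF, hFs, hFE, hFC, mul_zero, Finset.sum_const_zero] at h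
    linarith
  have hα : ∀ i j, α i j = B s (E i j) / 2 := by
    intro i j
    have h := expand (E i j)
    have hsum : ∑ i', ∑ j', α i' j' * B (E i j) (E i' j') = α i j * -2 := by
      rw [← Fintype.sum_prod_type' (fun i' j' => α i' j' * B (E i j) (E i' j')),
        Fintype.sum_eq_single (i, j), hEE]
      rintro ⟨i', j'⟩ hne
      rw [hEE' i j i' j' hne.symm, mul_zero]
    rw [hsum, hsymm _ ξ, hxE, hsymm _ F, hFE, hsymm _ s, hb] at h
    simp only [hEC, mul_zero, Finset.sum_const_zero] at h
    linarith
  have hβ : ∀ j, β j = -1 / 2 := by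
    intro j
    have h := expand (C j)
    have hsum : ∑ j', β j' * B (C j) (C j') = β j * -2 := by
      rw [Fintype.sum_eq_single j, hCC]
      intro j' hne
      rw [hCC' j j' hne.symm, mul_zero]
    rw [hsum, hsymm _ ξ, hxC, hsymm _ F, hFC, hsymm _ s, hsC] at h
    simp only [hsymm (C j) (E _ _), hEC, mul_zero, Finset.sum_const_zero] at h
    linarith
  have hα_tail : ∀ i : Fin l, (i : ℕ) < k → α i 0 = 1 := by
    intro i hi
    rw [hα, hsE1 i hi]
    norm_num
  have hα_zero : ∀ (i : Fin l) (j : Fin 4), ¬ ((i : ℕ) < k ∧ j = 0) → α i j = 0 := by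
    intro i j hij
    rw [hα]
    by_cases hj : j = 0
    · subst hj
      rw [hsE1' i fun hi => hij ⟨hi, rfl⟩, zero_div]
    · rw [hsEj i j hj, zero_div]
  refine ⟨hb, hα_tail, hα_zero, hβ, ?_⟩
  have hsum : ∑ i, ∑ j, α i j * B s (E i j) = 2 * k := by
    have hrow : ∀ i : Fin l, ∑ j, α i j * B s (E i j) = if (i : ℕ) < k then 2 else 0 := by
      intro i
      rw [Fintype.sum_eq_single 0 fun j hj => by rw [hsEj i j hj, mul_zero]]
      split_ifs with hi
      · rw [hα_tail i hi, hsE1 i hi, one_mul]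
      · rw [hsE1' i hi, mul_zero]
    simp_rw [hrow]
    rw [← Finset.sum_filter, Finset.sum_const, Fin.card_filter_val_lt, min_eq_right hkl,
      nsmul_eq_mul, mul_comm]
  have hs := expand s
  have hx := expand ξ
  rw [hsum, hsymm s F, hFs, hss, hb] at hs
  simp only [hsC, mul_zero, Finset.sum_const_zero] at hs
  rw [hxx, hxF, hsymm ξ s, hs, hb] at hx
  simp only [hxE, hxC, hβ, mul_zero, Finset.sum_const_zero, Finset.sum_const,
    Finset.card_univ, Fintype.card_fin, nsmul_eq_mul] at hx
  rw [Nat.cast_sub (by omega)] at hx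
  push_cast at hx
  linarith
end

section
/- Let V be a vector space over ℚ with a symmetric bilinear form ⟨·,·⟩. Fix a natural number ℓ ≤ 5 and vectors F, s, ξ ∈ V, a family E_{i,j} ∈ V for 1 ≤ i ≤ ℓ and 1 ≤ j ≤ 4, and C_j ∈ V for 1 ≤ j ≤ 20−4ℓ, satisfying: ⟨F,F⟩ = 0, ⟨F,s⟩ = 1, ⟨F,E_{i,j}⟩ = 0 and ⟨F,C_j⟩ = 0 for all indices; ⟨s,s⟩ = −2, ⟨s,E_{i,1}⟩ = 1 for all i, ⟨s,E_{i,j}⟩ = 0 for j ≠ 1, ⟨s,C_j⟩ = 0; ⟨E_{i,j},E_{i,j}⟩ = −2 and distinct vectors E_{i,j} are pairwise orthogonal; ⟨E_{i,j},C_{j'}⟩ = 0; ⟨C_j,C_j⟩ = −2 and distinct vectors C_j are pairwise orthogonal; ⟨ξ,F⟩ = 2, ⟨ξ,E_{i,j}⟩ = 0 for all i,j, ⟨ξ,C_j⟩ = 1 for all j, and ⟨ξ,ξ⟩ = −2. Suppose ξ = a·F + b·s + Σ_{i,j} α_{i,j}·E_{i,j} + Σ_j β_j·C_j for rational numbers a,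 b, α_{i,j}, β_j. Then b = 2, α_{i,1} = 1 for all i, α_{i,j} = 0 for j ≠ 1, β_j = −1/2 for all j, and a = 4 − ℓ. -/
/-- Linear-algebra form of Proposition 6.5: expansion of the cusp curve `ξ` in the basis
`F, s, E_{i,j}, C_j` of `Pic(X) ⊗ ℚ` for a quasi-elliptic K3 surface with a section `s`,
`ℓ` fibers of type `I₀*` and `20 − 4ℓ` fibers of type `III`. Here `E i 0` plays the role of
the tail `E_{4i−3}` met by the section `s`. -/
theorem cusp_expansion_section
    (V : Type*) [AddCommGroup V] [Module ℚ V]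
    (B : V →ₗ[ℚ] V →ₗ[ℚ] ℚ) (hsymm : ∀ x y : V, B x y = B y x)
    (l : ℕ) (hl : l ≤ 5)
    (F s ξ : V) (E : Fin l → Fin 4 → V) (C : Fin (20 - 4 * l) → V)
    (a b : ℚ) (α : Fin l → Fin 4 → ℚ) (β : Fin (20 - 4 * l) → ℚ)
    (hFF : B F F = 0) (hFs : B F s = 1)
    (hFE : ∀ i j, B F (E i j) = 0) (hFC : ∀ j, B F (C j) = 0)
    (hss : B s s = -2)
    (hsE1 : ∀ i : Fin l, B s (E i 0) = 1)
    (hsEj : ∀ (i : Fin l) (j : Fin 4), j ≠ 0 → B s (E i j) = 0)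
    (hsC : ∀ j, B s (C j) = 0)
    (hEE : ∀ i j, B (E i j) (E i j) = -2)
    (hEE' : ∀ i j i' j', (i, j) ≠ (i', j') → B (E i j) (E i' j') = 0)
    (hEC : ∀ i j j', B (E i j) (C j') = 0)
    (hCC : ∀ j, B (C j) (C j) = -2)
    (hCC' : ∀ j j', j ≠ j' → B (C j) (C j') = 0)
    (hxF : B ξ F = 2)
    (hxE : ∀ i j, B ξ (E i j) = 0)
    (hxC : ∀ j, B ξ (C j) = 1)
    (hxx : B ξ ξ = -2)
    (hrep : ξ = a • F + b • s + (∑ i, ∑ j, α i j • E i j) + ∑ j, β j • C j) :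
    b = 2 ∧ (∀ i : Fin l, α i 0 = 1) ∧
      (∀ (i : Fin l) (j : Fin 4), j ≠ 0 → α i j = 0) ∧
      (∀ j, β j = -1/2) ∧
      a = 4 - (l : ℚ) := by
  have pairing (v : V) : B ξ v = a * B F v + b * B s v
      + (∑ i, ∑ j, α i j * B (E i j) v) + ∑ j, β j * B (C j) v := by
    conv_lhs => rw [hrep]
    simp
  have hb : b = 2 := by
    have h := pairing F
    simpa [hxF, hFF, hsymm s F, hFs, fun i j => hsymm (E i j) F, hFE,
      fun j => hsymm (C j) F, hFC, eq_comm] using h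
  have sum_E (i : Fin l) (j : Fin 4) :
      (∑ i', ∑ j', α i' j' * B (E i' j') (E i j)) = -2 * α i j := by
    rw [Finset.sum_eq_single i, Finset.sum_eq_single j, hEE, mul_comm]
    · intro j' _ hj
      rw [hEE' _ _ _ _ (by simpa using hj), mul_zero]
    · simp
    · intro i' _ hi
      refine Finset.sum_eq_zero fun j' _ => ?_
      rw [hEE' _ _ _ _ (by simp [hi]), mul_zero]
    · simp
  have sum_C (j : Fin (20 - 4 * l)) : (∑ j', β j' * B (C j') (C j)) = -2 * β j := by
    rw [Finset.sum_eq_single j, hCC, mul_comm]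
    · intro j' _ hj
      rw [hCC' _ _ hj, mul_zero]
    · simp
  have pairing_E (i : Fin l) (j : Fin 4) : 0 = b * B s (E i j) + -2 * α i j := by
    have h := pairing (E i j)
    rw [sum_E] at h
    simpa [hxE, hFE, fun j' => hsymm (C j') (E i j), hEC] using h
  have hα₀ (i : Fin l) : α i 0 = 1 := by
    have h := pairing_E i 0
    rw [hsE1] at h
    linarith
  have hα (i : Fin l) (j : Fin 4) (hj : j ≠ 0) : α i j = 0 := by
    have h := pairing_E i j
    rw [hsEj i j hj] at h
    linarith
  have hβ (j : Fin (20 - 4 * l)) : β j = -1/2 := by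
    have h := pairing (C j)
    rw [sum_C] at h
    simp only [hxC, hFC, hsC, hEC, mul_zero, Finset.sum_const_zero] at h
    linarith
  have hxs : B ξ s = a - 2 * b + l := by
    rw [pairing s]
    simp [hFs, hss, fun i j => hsymm (E i j) s, fun j => hsymm (C j) s, hsC,
      Fin.sum_univ_succ, hsE1, hsEj, hα₀]
    ring
  refine ⟨hb, hα₀, hα, hβ, ?_⟩
  have h := pairing ξ
  simp only [hxx, hsymm F ξ, hxF, hsymm s ξ, hxs, fun i j => hsymm (E i j) ξ, hxE,
    fun j => hsymm (C j) ξ, hxC, hβ, hb, mul_zero, Finset.sum_const_zero, Finset.sum_const,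
    Finset.card_univ, Fintype.card_fin, nsmul_eq_mul] at h
  rw [Nat.cast_sub (by omega)] at h
  push_cast at h
  linarith
end

section
/- Let Λ = ℤ²² equipped with the symmetric bilinear form given by the block-diagonal Gram matrix G = diag(U(2), G'), where U(2) is the 2×2 matrix [[0,2],[2,0]] and G' is the 20×20 matrix with G'ᵢᵢ = −2 for 1 ≤ i ≤ 19, G'ᵢⱼ = 0 for distinct i, j ≤ 19, G'ᵢ,₂₀ = G'₂₀,ᵢ = −1 for i ≤ 19, and G'₂₀,₂₀ = −10. Then for n = 8 and for n = 16 there do not exist vectors e₁,…,eₙ ∈ Λ with ⟨eᵢ,eᵢ⟩ = −2 for all i and ⟨eᵢ,eⱼ⟩ = 0 for all i ≠ j, such that e₁ + ⋯ + eₙ = 2v for some v ∈ Λ. -/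
/-- Gram matrix of the even lattice `U(2) ⊕ Ã₁²⁰` (indices 0,1: the hyperbolic plane scaled
by 2; indices 2,…,20: the vectors `e₁,…,e₁₉` of square `−2`; index 21: the vector
`δ = ½(e₁ + ⋯ + e₂₀)` of square `−10`, with `eᵢ·δ = −1`). By Rudakov–Shafarevich this is the
Picard lattice of a supersingular K3 surface in characteristic 2 with Artin invariant 10. -/
def artin10Gram : Matrix (Fin 22) (Fin 22) ℤ := fun i j =>
  if (i = 0 ∧ j = 1) ∨ (i = 1 ∧ j = 0) then 2
  else if i = j ∧ 2 ≤ (i : ℕ) ∧ (i : ℕ) ≤ 20 then -2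
  else if i = 21 ∧ j = 21 then -10
  else if (i = 21 ∧ 2 ≤ (j : ℕ) ∧ (j : ℕ) ≤ 20) ∨ (j = 21 ∧ 2 ≤ (i : ℕ) ∧ (i : ℕ) ≤ 20)
    then -1
  else 0

/-- The bilinear pairing on `ℤ²²` given by the Gram matrix `artin10Gram`. -/
def artin10Pair (x y : Fin 22 → ℤ) : ℤ := ∑ i, ∑ j, x i * artin10Gram i j * y j

theorem artin10Pair_eq_toBilin' (x y : Fin 22 → ℤ) :
    artin10Pair x y = Matrix.toBilin' artin10Gram x y :=
  (Matrix.toBilin'_apply artin10Gram x y).symm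

/-- The pairing in coordinates, the middle coordinates being those of `e₁,…,e₁₉`. -/
theorem artin10Pair_eq (x y : Fin 22 → ℤ) :
    artin10Pair x y = 2 * (x 0 * y 1 + x 1 * y 0)
      - 2 * ∑ k : Fin 19, x (k.succ.succ.castSucc) * y (k.succ.succ.castSucc)
      - x 21 * ∑ k : Fin 19, y (k.succ.succ.castSucc)
      - y 21 * ∑ k : Fin 19, x (k.succ.succ.castSucc) - 10 * x 21 * y 21 := by
  simp +decide [artin10Pair, Fin.sum_univ_succ, artin10Gram]
  ring

/-- A vector whose square is divisible by `4` pairs evenly with the whole lattice. -/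
theorem even_artin10Pair_of_four_dvd {v : Fin 22 → ℤ} (hv : 4 ∣ artin10Pair v v)
    (x : Fin 22 → ℤ) : Even (artin10Pair v x) := by
  have hsq : Even (∑ k : Fin 19, v k.succ.succ.castSucc * v k.succ.succ.castSucc
      - ∑ k : Fin 19, v k.succ.succ.castSucc) := by
    rw [← Finset.sum_sub_distrib]
    refine Finset.even_sum _ fun k _ => ?_
    rw [← mul_sub_one]
    exact Int.even_mul_pred_self _
  rw [artin10Pair_eq] at hv ⊢
  obtain ⟨c, hc⟩ := hv
  set S := ∑ k : Fin 19, v k.succ.succ.castSucc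
  set Q := ∑ k : Fin 19, v k.succ.succ.castSucc * v k.succ.succ.castSucc
  have hhalf : Q + v 21 * S + 5 * v 21 * v 21 = 2 * (v 0 * v 1 - c) := by linarith
  have hparity : Even (Q + v 21 * S + 5 * v 21 * v 21) := hhalf ▸ even_two_mul _
  have hd : Even (v 21) := by
    by_contra h
    simp [h, parity_simps, show ¬ Even (5 : ℤ) by decide] at hparity hsq
    tauto
  have hS : Even S := by
    simp [hd, parity_simps] at hparity hsq
    tauto
  simp [hd, hS, parity_simps]

/-- Lattice-theoretic statement of Section 9: in the Picard lattice `U(2) ⊕ Ã₁²⁰` of a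
supersingular K3 surface of Artin invariant `σ = 10` in characteristic 2, for `n = 8` and
`n = 16` there is no family of `n` pairwise orthogonal vectors of square `−2` whose sum is
divisible by 2. -/
theorem no_two_divisible_A1_8_or_16_in_artin10 :
    ∀ n : ℕ, n = 8 ∨ n = 16 →
      ¬ ∃ e : Fin n → (Fin 22 → ℤ),
        (∀ i, artin10Pair (e i) (e i) = -2) ∧
        (∀ i j, i ≠ j → artin10Pair (e i) (e j) = 0) ∧
        ∃ v : Fin 22 → ℤ, ∑ i, e i = 2 • v := by
  rintro n hn ⟨e, hdiag, horth, v, hv⟩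
  have hve (j : Fin n) : artin10Pair v (e j) = -1 := by
    have h : artin10Pair (∑ i, e i) (e j) = -2 := by
      rw [artin10Pair_eq_toBilin', map_sum, LinearMap.sum_apply,
        Finset.sum_eq_single j (fun i _ hij => by
          rw [← artin10Pair_eq_toBilin', horth i j hij]) (by simp),
        ← artin10Pair_eq_toBilin', hdiag]
    rw [hv, artin10Pair_eq_toBilin', map_nsmul, LinearMap.smul_apply,
      ← artin10Pair_eq_toBilin', nsmul_eq_mul] at h
    push_cast at h
    linarith
  have hvv : 2 * artin10Pair v v = -n := by
    have h : artin10Pair v (∑ j, e j) = -n := by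
      rw [artin10Pair_eq_toBilin', map_sum]
      simp [← artin10Pair_eq_toBilin', hve]
    rw [hv, artin10Pair_eq_toBilin', map_nsmul, ← artin10Pair_eq_toBilin', nsmul_eq_mul] at h
    exact_mod_cast h
  have heven := even_artin10Pair_of_four_dvd (v := v) (by omega) (e ⟨0, by omega⟩)
  rw [hve] at heven
  exact absurd heven (by decide)
end
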